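/- For all integers ℓ ≥ 0 and r ≥ 0, the geometric realization of the poset X_{ℓ,r} is a contractible topological space. (Proposition 2.2 of the paper.) -/

import Mathlib

/-- The geometric realization of a poset `P` (the realization of the nerve of `P`, i.e. of
the order complex of `P`), modelled concretely as the space of finitely supported
"barycentric coordinate" functions: assignments of nonnegative weights summing to `1`
whose support is a chain of `P`.  It is topologized as a subspace of `P → ℝ` with the
product topology. -/
def PosetRealization (P : Type*) [Preorder P] : Set (P → ℝ) :=
  {f | (∀ p, 0 ≤ f p) ∧ (Function.support f).Finite ∧ ∑ᶠ p, f p = 1 ∧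
      IsChain (· ≤ ·) (Function.support f)}

/-- The map of geometric realizations induced by a map of posets `g : P → Q`
(the realization of the induced simplicial map of nerves): a point with barycentric
coordinates `f` is sent to the point whose weight at `q` is the total weight of the
fiber `g ⁻¹ {q}`. -/
noncomputable def inducedChainMap {P Q : Type*} (g : P → Q) (f : P → ℝ) : Q → ℝ :=
  fun q => ∑ᶠ p ∈ {p | g p = q}, f p

/-- The three letters `a`, `b`, `(ab)` used to form the words of the poset `X_{ℓ,r}`. -/
inductive XLetter : Type
  | A : XLetter
  | B : XLetter
  | AB : XLetter
deriving DecidableEq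

/-- Number of occurrences of the letter `a` contributed by a letter. -/
def XLetter.ca : XLetter → ℕ
  | .A => 1
  | .B => 0
  | .AB => 1

/-- Number of occurrences of the letter `b` contributed by a letter. -/
def XLetter.cb : XLetter → ℕ
  | .A => 0
  | .B => 1
  | .AB => 1

/-- One step of the order relation on words: `XStep x y` holds iff `x` is obtained from `y`
by replacing one adjacent pair `ab` or `ba` by the single letter `(ab)`. -/
def XStep (x y : List XLetter) : Prop :=
  ∃ u v : List XLetter, x = u ++ [XLetter.AB] ++ v ∧
    (y = u ++ [XLetter.A, XLetter.B] ++ v ∨ y = u ++ [XLetter.B, XLetter.A] ++ v)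

/-- The underlying set of the poset `X_{ℓ,r}`: words in the letters `a`, `b`, `(ab)` with
exactly `l` occurrences of `a` and `r` occurrences of `b`. -/
def XWord (l r : ℕ) : Type :=
  {w : List XLetter // (w.map XLetter.ca).sum = l ∧ (w.map XLetter.cb).sum = r}

theorem XStep.length_lt {x y : List XLetter} (h : XStep x y) : x.length < y.length := by
  obtain ⟨u, v, rfl, (rfl | rfl)⟩ := h <;> simp [List.length_append]

theorem xword_le_length {x y : List XLetter} (h : Relation.ReflTransGen XStep x y) :
    x.length ≤ y.length := by
  induction h with
  | refl => exact le_rfl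
  | tail _ h ih => exact ih.trans h.length_lt.le

/-- The partial order on `X_{ℓ,r}`, generated by the replacement steps. -/
instance (l r : ℕ) : PartialOrder (XWord l r) where
  le x y := Relation.ReflTransGen XStep x.1 y.1
  le_refl _ := Relation.ReflTransGen.refl
  le_trans _ _ _ h h' := Relation.ReflTransGen.trans h h'
  le_antisymm x y h h' := by
    rcases Relation.ReflTransGen.cases_head h with heq | ⟨z, hxz, hzy⟩
    · exact Subtype.ext heq
    · exact absurd ((xword_le_length h').trans_lt
        (hxz.length_lt.trans_le (xword_le_length hzy))) (lt_irrefl _)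

/-!
Pointwise comparable monotone maps of finite posets induce homotopic maps of realizations: the
homotopy pushes the weights of a point up from one map to the other, starting at the top of its
chain, so that the support remains a chain at all times.

Prepending `b` is a homotopy equivalence `|X_{l,r}| ≃ |X_{l,r+1}|`, with inverse induced by erasing
the first `b`. Erasing and then prepending moves the first `b` to the front. To compare this with
the identity, halt the first `b` as soon as only `k` letters `a` precede it. Passing from `k + 1` to
`k` moves the `b` across one further `a`, and both stages lie above the map which merges these two
letters into `(ab)`; for `k ≥ l` nothing moves. Since `X_{l,0}` is a single point, induction on `r`
concludes.
-/

theorem inducedChainMap_eq_linearMap {P Q : Type*} [Finite P] [Finite Q] (f : P → Q) :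
    inducedChainMap f = FunOnFinite.linearMap ℝ ℝ f := by
  classical
  cases nonempty_fintype P
  ext x q
  rw [FunOnFinite.linearMap_apply_apply, inducedChainMap, finsum_mem_eq_toFinset_sum,
    Set.toFinset_ofPred]

theorem exists_of_inducedChainMap_ne_zero {P Q : Type*} {f : P → Q} {x : P → ℝ} {q : Q}
    (h : inducedChainMap f x q ≠ 0) : ∃ p, f p = q ∧ x p ≠ 0 :=
  exists_ne_zero_of_finsum_mem_ne_zero h

namespace PosetRealization

open scoped unitInterval

section Functoriality

theorem mem_iff_mem_stdSimplex {P : Type*} [Preorder P] [Fintype P] {x : P → ℝ} :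
    x ∈ PosetRealization P ↔ x ∈ stdSimplex ℝ P ∧ IsChain (· ≤ ·) (Function.support x) := by
  simp [PosetRealization, stdSimplex, finsum_eq_sum_of_fintype, Set.toFinite, and_assoc]

variable {P Q R : Type*} [Preorder P] [Preorder Q] [Preorder R] [Finite P] [Finite Q] [Finite R]

theorem inducedChainMap_mem (f : P →o Q) {x : P → ℝ} (hx : x ∈ PosetRealization P) :
    inducedChainMap f x ∈ PosetRealization Q := by
  cases nonempty_fintype P
  cases nonempty_fintype Q
  obtain ⟨hsimplex, hchain⟩ := mem_iff_mem_stdSimplex.1 hx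
  refine mem_iff_mem_stdSimplex.2 ⟨?_, ?_⟩
  · rw [inducedChainMap_eq_linearMap]
    exact stdSimplex.image_linearMap f ⟨x, hsimplex, rfl⟩
  · intro q hq q' hq' _
    obtain ⟨p, rfl, hp⟩ := exists_of_inducedChainMap_ne_zero hq
    obtain ⟨p', rfl, hp'⟩ := exists_of_inducedChainMap_ne_zero hq'
    exact (hchain.total hp hp').imp (f.monotone ·) (f.monotone ·)

/-- The continuous map `|P| → |Q|` of realizations induced by a monotone map `P → Q`. -/
noncomputable def map (f : P →o Q) : C(PosetRealization P, PosetRealization Q) where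
  toFun x := ⟨inducedChainMap f x, inducedChainMap_mem f x.2⟩
  continuous_toFun := by
    simp only [inducedChainMap_eq_linearMap]
    exact ((FunOnFinite.continuous_linearMap ℝ ℝ f).comp continuous_subtype_val).subtype_mk _

theorem map_id : map (OrderHom.id : P →o P) = ContinuousMap.id _ := by
  ext1 x
  refine Subtype.ext ?_
  simp [map, inducedChainMap_eq_linearMap]

theorem map_comp (g : Q →o R) (f : P →o Q) : map (g.comp f) = (map g).comp (map f) := by
  ext1 x
  refine Subtype.ext ?_
  simp [map, inducedChainMap_eq_linearMap, FunOnFinite.linearMap_comp]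

end Functoriality

section Prism

variable {P : Type*} [Preorder P] [Fintype P]

open Classical in
/-- The total weight which `x` puts on the elements strictly above `p`. -/
noncomputable def massAbove (x : P → ℝ) (p : P) : ℝ :=
  ∑ q with p < q, x q

theorem massAbove_nonneg {x : P → ℝ} (hx : ∀ p, 0 ≤ x p) (p : P) : 0 ≤ massAbove x p :=
  Finset.sum_nonneg fun q _ => hx q

theorem add_massAbove_le_sum {x : P → ℝ} (hx : ∀ p, 0 ≤ x p) {p : P} {s : Finset P}
    (hs : ∀ q, p ≤ q → q ∈ s) : x p + massAbove x p ≤ ∑ q ∈ s, x q := by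
  classical
  rw [massAbove, ← Finset.sum_insert (by simp)]
  refine Finset.sum_le_sum_of_subset_of_nonneg (fun q hq => hs q ?_) fun q _ _ => hx q
  rcases Finset.mem_insert.1 hq with rfl | hq
  · exact le_rfl
  · exact (Finset.mem_filter.1 hq).2.le

theorem add_massAbove_le_massAbove {x : P → ℝ} (hx : ∀ p, 0 ≤ x p) {p p' : P} (h : p' < p) :
    x p + massAbove x p ≤ massAbove x p' :=
  add_massAbove_le_sum hx fun q hq => by simpa using h.trans_le hq

/-- The part of the weight `x p` which lies in the topmost portion of `x` of total mass `t`, when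
the support of `x` is a chain and its weights are laid out in order. -/
noncomputable def topPart (t : ℝ) (x : P → ℝ) (p : P) : ℝ :=
  min (x p) (max 0 (t - massAbove x p))

theorem topPart_nonneg (t : ℝ) {x : P → ℝ} (hx : ∀ p, 0 ≤ x p) (p : P) : 0 ≤ topPart t x p :=
  le_min (hx p) (le_max_left _ _)

theorem topPart_le (t : ℝ) (x : P → ℝ) (p : P) : topPart t x p ≤ x p :=
  min_le_left _ _

theorem topPart_zero {x : P → ℝ} (hx : ∀ p, 0 ≤ x p) (p : P) : topPart 0 x p = 0 := by
  rw [topPart, zero_sub, max_eq_left (neg_nonpos.2 (massAbove_nonneg hx p)), min_eq_right (hx p)]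

theorem topPart_one {x : P → ℝ} (hx : x ∈ stdSimplex ℝ P) (p : P) : topPart 1 x p = x p := by
  have h : x p + massAbove x p ≤ 1 := hx.2 ▸ add_massAbove_le_sum hx.1 (by simp)
  exact min_eq_left (le_max_of_le_right (le_sub_iff_add_le.2 h))

theorem le_of_topPart_lt_of_topPart_pos {t : ℝ} {x : P → ℝ} (hx : ∀ p, 0 ≤ x p)
    (hchain : IsChain (· ≤ ·) (Function.support x)) {p p' : P}
    (hp : topPart t x p < x p) (hp' : 0 < topPart t x p') : p ≤ p' := by
  have hxp : x p ≠ 0 := ((topPart_nonneg t hx p).trans_lt hp).ne'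
  have hxp' : x p' ≠ 0 := (hp'.trans_le (topPart_le t x p')).ne'
  by_contra hle
  have hlt : p' < p := lt_of_le_not_ge ((hchain.total hxp hxp').resolve_left hle) hle
  have hmass := add_massAbove_le_massAbove hx hlt
  have hupper : t - massAbove x p < x p :=
    (le_max_right _ _).trans_lt ((min_lt_iff.1 hp).resolve_left (lt_irrefl _))
  have hlower : 0 < t - massAbove x p' :=
    (lt_max_iff.1 (lt_min_iff.1 hp').2).resolve_left (lt_irrefl _)
  linarith

theorem continuous_topPart (p : P) : Continuous fun y : ℝ × (P → ℝ) => topPart y.1 y.2 p := by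
  unfold topPart massAbove
  fun_prop

/-- The coordinates of the image of `(t, x)` under the map `[0, 1] × |P| → |P × {false < true}|`
which raises the topmost portion of `x` of mass `t` to level `true`. -/
noncomputable def prism (t : ℝ) (x : P → ℝ) : P × Bool → ℝ
  | (p, true) => topPart t x p
  | (p, false) => x p - topPart t x p

theorem prism_mem_stdSimplex (t : ℝ) {x : P → ℝ} (hx : x ∈ stdSimplex ℝ P) :
    prism t x ∈ stdSimplex ℝ (P × Bool) := by
  refine ⟨?_, ?_⟩
  · rintro ⟨p, _ | _⟩
    · exact sub_nonneg.2 (topPart_le t x p)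
    · exact topPart_nonneg t hx.1 p
  · simpa [Fintype.sum_prod_type, prism] using hx.2

theorem prism_mem (t : ℝ) {x : P → ℝ} (hx : x ∈ PosetRealization P) :
    prism t x ∈ PosetRealization (P × Bool) := by
  obtain ⟨hsimplex, hchain⟩ := mem_iff_mem_stdSimplex.1 hx
  have lower {p} (hp : prism t x (p, false) ≠ 0) : topPart t x p < x p :=
    (topPart_le t x p).lt_of_ne' (sub_ne_zero.1 hp)
  have upper {p} (hp : prism t x (p, true) ≠ 0) : 0 < topPart t x p :=
    (topPart_nonneg t hsimplex.1 p).lt_of_ne' hp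
  have support_lower {p} (hp : prism t x (p, false) ≠ 0) : x p ≠ 0 :=
    ((topPart_nonneg t hsimplex.1 p).trans_lt (lower hp)).ne'
  have support_upper {p} (hp : prism t x (p, true) ≠ 0) : x p ≠ 0 :=
    ((upper hp).trans_le (topPart_le t x p)).ne'
  refine mem_iff_mem_stdSimplex.2 ⟨prism_mem_stdSimplex t hsimplex, ?_⟩
  rintro ⟨p, _ | _⟩ hp ⟨p', _ | _⟩ hp' -
  · exact (hchain.total (support_lower hp) (support_lower hp')).imp (⟨·, le_rfl⟩) (⟨·, le_rfl⟩)
  · exact .inl ⟨le_of_topPart_lt_of_topPart_pos hsimplex.1 hchain (lower hp) (upper hp'),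
      Bool.false_le _⟩
  · exact .inr ⟨le_of_topPart_lt_of_topPart_pos hsimplex.1 hchain (lower hp') (upper hp),
      Bool.false_le _⟩
  · exact (hchain.total (support_upper hp) (support_upper hp')).imp (⟨·, le_rfl⟩) (⟨·, le_rfl⟩)

theorem continuous_prism : Continuous fun y : ℝ × (P → ℝ) => prism y.1 y.2 := by
  refine continuous_pi ?_
  rintro ⟨p, _ | _⟩
  · exact ((continuous_apply p).comp continuous_snd).sub (continuous_topPart p)
  · exact continuous_topPart p

end Prism

section Homotopy

variable {P Q : Type*} [Preorder P] [Preorder Q] [Finite P] [Finite Q]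

/-- The inclusion of `P` in `P × {false < true}` at level `b`. -/
def atLevel (P : Type*) [Preorder P] (b : Bool) : P →o P × Bool :=
  OrderHom.id.prod (OrderHom.const P b)

theorem map_atLevel_apply (b : Bool) (x : PosetRealization P) (p : P) (c : Bool) :
    (map (atLevel P b) x).1 (p, c) = if c = b then x.1 p else 0 := by
  by_cases h : c = b <;> simp [map, atLevel, inducedChainMap, h, Ne.symm]

theorem map_atLevel_homotopic :
    (map (atLevel P false)).Homotopic (map (atLevel P true)) := by
  cases nonempty_fintype P
  refine ⟨⟨⟨fun y => ⟨prism y.1 y.2, prism_mem y.1 y.2.2⟩, ?_⟩, fun x => ?_, fun x => ?_⟩⟩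
  · exact (continuous_prism.comp (f := fun y : I × PosetRealization P => ((y.1 : ℝ), y.2.1))
      (by fun_prop)).subtype_mk _
  · ext ⟨p, _ | _⟩ <;> simp [map_atLevel_apply, prism, topPart_zero x.2.1]
  · have hsimplex := (mem_iff_mem_stdSimplex.1 x.2).1
    ext ⟨p, _ | _⟩ <;> simp [map_atLevel_apply, prism, topPart_one hsimplex]

/-- The monotone map `P × {false < true} → Q` glued from two comparable monotone maps `P → Q`. -/
def glue (f g : P →o Q) (h : f ≤ g) : P × Bool →o Q where
  toFun
    | (p, false) => f p
    | (p, true) => g p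
  monotone' := by
    rintro ⟨p, _ | _⟩ ⟨p', _ | _⟩ ⟨hp, hb⟩
    · exact f.monotone hp
    · exact (f.monotone hp).trans (h p')
    · cases hb rfl
    · exact g.monotone hp

theorem map_homotopic_of_le {f g : P →o Q} (h : f ≤ g) : (map f).Homotopic (map g) := by
  have hglue : (map ((glue f g h).comp (atLevel P false))).Homotopic
      (map ((glue f g h).comp (atLevel P true))) := by
    rw [map_comp, map_comp]
    exact .comp (.refl _) map_atLevel_homotopic
  exact hglue

end Homotopy

theorem eq_singleton_of_subsingleton {P : Type*} [Preorder P] [Nonempty P] [Subsingleton P] :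
    PosetRealization P = {fun _ => 1} := by
  have := Fintype.ofFinite P
  ext x
  rw [mem_iff_mem_stdSimplex, stdSimplex_unique]
  exact and_iff_left (Set.subsingleton_of_subsingleton.isChain)

instance {P : Type*} [Preorder P] [Nonempty P] [Subsingleton P] :
    ContractibleSpace (PosetRealization P) := by
  rw [eq_singleton_of_subsingleton]
  infer_instance

end PosetRealization

open XLetter

local infix:50 "≼" => Relation.ReflTransGen XStep

namespace XStep

theorem cons (c : XLetter) {x y : List XLetter} (h : XStep x y) : XStep (c :: x) (c :: y) := by
  obtain ⟨u, v, rfl, hy⟩ := h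
  exact ⟨c :: u, v, rfl, hy.imp (congrArg (c :: ·)) (congrArg (c :: ·))⟩

theorem A_B (v : List XLetter) : XStep (AB :: v) (A :: B :: v) :=
  ⟨[], v, rfl, .inl rfl⟩

theorem B_A (v : List XLetter) : XStep (AB :: v) (B :: A :: v) :=
  ⟨[], v, rfl, .inr rfl⟩

@[elab_as_elim]
theorem cons_induction {motive : ∀ x y, XStep x y → Prop}
    (A_B : ∀ v, motive _ _ (A_B v)) (B_A : ∀ v, motive _ _ (B_A v))
    (cons : ∀ c x y (h : XStep x y), motive x y h → motive _ _ (h.cons c))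
    {x y : List XLetter} (h : XStep x y) : motive x y h := by
  obtain ⟨u, v, rfl, hy⟩ := h
  induction u generalizing y with
  | nil =>
    rcases hy with rfl | rfl
    · exact A_B v
    · exact B_A v
  | cons c u ih =>
    rcases hy with rfl | rfl
    · exact cons c _ _ _ (ih (.inl rfl))
    · exact cons c _ _ _ (ih (.inr rfl))

theorem cons_le_cons (c : XLetter) {x y : List XLetter} (h : x ≼ y) : c :: x ≼ c :: y :=
  h.lift (c :: ·) fun _ _ => cons c

end XStep

namespace XLetter

instance : Fintype XLetter := ⟨{A, B, AB}, fun c => by cases c <;> simp⟩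

/-- The number of occurrences of `a` in a word. -/
def numA (w : List XLetter) : ℕ := (w.map ca).sum

/-- The number of occurrences of `b` in a word. -/
def numB (w : List XLetter) : ℕ := (w.map cb).sum

@[simp]
theorem numA_nil : numA [] = 0 := rfl

@[simp]
theorem numB_nil : numB [] = 0 := rfl

@[simp]
theorem numA_cons (c : XLetter) (w : List XLetter) : numA (c :: w) = c.ca + numA w := by
  simp [numA]

@[simp]
theorem numB_cons (c : XLetter) (w : List XLetter) : numB (c :: w) = c.cb + numB w := by
  simp [numB]

theorem length_le_numA_add_numB (w : List XLetter) : w.length ≤ numA w + numB w := by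
  induction w with
  | nil => simp
  | cons c w ih => cases c <;> simp [ca, cb] <;> omega

theorem eq_replicate_of_numB_eq_zero {w : List XLetter} (hw : numB w = 0) :
    w = List.replicate (numA w) A := by
  induction w with
  | nil => rfl
  | cons c w ih =>
    cases c
    · simpa [ca, add_comm 1, List.replicate_succ] using ih (by simpa [cb] using hw)
    all_goals simp [cb] at hw

/-- The word obtained by removing the first occurrence of `b`, where removing `b` from the letter
`(ab)` leaves `a`. -/
def eraseB : List XLetter → List XLetter
  | [] => []
  | A :: w => A :: eraseB w
  | B :: w => w
  | AB :: w => A :: w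

theorem eraseB_le_eraseB_of_step {x y : List XLetter} (h : XStep x y) : eraseB x ≼ eraseB y := by
  induction h using XStep.cons_induction with
  | A_B v => exact .refl
  | B_A v => exact .refl
  | cons c x y h ih =>
    cases c
    · exact XStep.cons_le_cons A ih
    · exact .single h
    · exact .single (h.cons A)

theorem numA_eraseB (w : List XLetter) : numA (eraseB w) = numA w := by
  induction w with
  | nil => rfl
  | cons c w ih => cases c <;> simp [eraseB, ca, ih]

theorem numB_eraseB (w : List XLetter) : numB (eraseB w) = numB w - 1 := by
  induction w with
  | nil => rfl
  | cons c w ih => cases c <;> simp [eraseB, cb, ih]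

end XLetter

/-- A monotone operation on words which preserves the number of letters `a`, and also the number of
letters `b` when there are any. Words beginning with `b` are required to be fixed in order that
`WordEndo.underA` preserves monotonicity across the relation `(ab)v < abv`. -/
structure WordEndo where
  toFun : List XLetter → List XLetter
  le_of_step : ∀ {x y}, XStep x y → toFun x ≼ toFun y
  numA_apply : ∀ w, numA (toFun w) = numA w
  numB_apply : ∀ w, 0 < numB w → numB (toFun w) = numB w
  apply_B_cons : ∀ w, toFun (B :: w) = B :: w

namespace WordEndo

instance : CoeFun WordEndo fun _ => List XLetter → List XLetter := ⟨toFun⟩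

instance : Preorder WordEndo where
  le f g := ∀ w, 0 < numB w → f w ≼ g w
  le_refl _ _ _ := .refl
  le_trans _ _ _ h h' w hw := (h w hw).trans (h' w hw)

/-- The operation which moves the first `b` of a word to the front, splitting `(ab)` if
necessary. -/
def pullB : WordEndo where
  toFun w := B :: eraseB w
  le_of_step h := XStep.cons_le_cons B (eraseB_le_eraseB_of_step h)
  numA_apply w := by simp [ca, numA_eraseB]
  numB_apply w hw := by
    have := numB_eraseB w
    simp only [numB_cons, cb] at this ⊢
    omega
  apply_B_cons _ := rfl

/-- The operation which merges the initial `a` of a word, if there is one, with the first `b`. -/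
def mergeB : WordEndo where
  toFun
    | A :: w => AB :: eraseB w
    | w => w
  le_of_step h := by
    induction h using XStep.cons_induction with
    | A_B v => exact .refl
    | B_A v => exact .single (XStep.B_A v)
    | cons c x y h _ =>
      cases c
      · exact XStep.cons_le_cons AB (eraseB_le_eraseB_of_step h)
      all_goals exact .single (h.cons _)
  numA_apply
    | [] | B :: _ | AB :: _ => rfl
    | A :: w => by simp [ca, numA_eraseB]
  numB_apply
    | [], _ | B :: _, _ | AB :: _, _ => rfl
    | A :: w, hw => by
      have := numB_eraseB w
      simp only [numB_cons, cb] at this hw ⊢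
      omega
  apply_B_cons _ := rfl

/-- The operation which applies `f` to what follows the initial `a` of a word, if there is one. -/
def underA (f : WordEndo) : WordEndo where
  toFun
    | A :: w => A :: f w
    | w => w
  le_of_step h := by
    induction h using XStep.cons_induction with
    | A_B v => simpa only [f.apply_B_cons] using .single (XStep.A_B v)
    | B_A v => exact .single (XStep.B_A v)
    | cons c x y h _ =>
      cases c
      · exact XStep.cons_le_cons A (f.le_of_step h)
      all_goals exact .single (h.cons _)
  numA_apply
    | [] | B :: _ | AB :: _ => rfl
    | A :: w => by simp [f.numA_apply]
  numB_apply
    | [], _ | B :: _, _ | AB :: _, _ => rfl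
    | A :: w, hw => by simpa [cb] using f.numB_apply w (by simpa [cb] using hw)
  apply_B_cons _ := rfl

theorem monotone_underA : Monotone underA := by
  rintro f g h (_ | ⟨_ | _ | _, w⟩) hw
  · exact .refl
  · exact XStep.cons_le_cons A (h w (by simpa [cb] using hw))
  · exact .refl
  · exact .refl

theorem mergeB_le_underA_pullB : mergeB ≤ underA pullB
  | [], _ | B :: _, _ | AB :: _, _ => .refl
  | A :: w, _ => .single (XStep.A_B (eraseB w))

theorem mergeB_le_pullB : mergeB ≤ pullB
  | [], hw => absurd hw (lt_irrefl 0)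
  | A :: w, _ => .single (XStep.B_A (eraseB w))
  | B :: _, _ => .refl
  | AB :: w, _ => .single (XStep.B_A w)

theorem iterate_underA_pullB_apply {k : ℕ} {w : List XLetter} (hA : numA w ≤ k)
    (hB : 0 < numB w) : (underA^[k] pullB) w = w := by
  induction k generalizing w with
  | zero => rcases w with _ | ⟨_ | _ | _, w⟩ <;> simp_all [pullB, eraseB, ca]
  | succ k ih =>
    rw [Function.iterate_succ_apply']
    rcases w with _ | ⟨_ | _ | _, w⟩
    · rfl
    · exact congrArg (A :: ·) (ih (by simp [ca] at hA ⊢; omega) (by simpa [cb] using hB))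
    · rfl
    · rfl

end WordEndo

namespace XWord

open ContinuousMap PosetRealization WordEndo

variable {l r : ℕ}

instance : Finite (XWord l r) :=
  have hfinite : {w | numA w = l ∧ numB w = r}.Finite :=
    (List.finite_length_le XLetter (l + r)).subset fun w hw =>
      (length_le_numA_add_numB w).trans_eq (congrArg₂ (· + ·) hw.1 hw.2)
  hfinite.to_subtype

instance : Unique (XWord l 0) where
  default := ⟨List.replicate l A, by simp [ca], by simp [cb]⟩
  uniq w := Subtype.ext ((eq_replicate_of_numB_eq_zero w.2.2).trans (by rw [numA, w.2.1]))

theorem numB_pos (w : XWord l (r + 1)) : 0 < numB w.1 :=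
  r.succ_pos.trans_eq w.2.2.symm

/-- Removal of the first `b` as a monotone map. -/
def eraseHom : XWord l (r + 1) →o XWord l r where
  toFun w :=
    ⟨eraseB w.1, (numA_eraseB w.1).trans w.2.1, (numB_eraseB w.1).trans (congrArg (· - 1) w.2.2)⟩
  monotone' _ _ h := h.lift' eraseB fun _ _ => eraseB_le_eraseB_of_step

/-- Prepending the letter `b` as a monotone map. -/
def consHom : XWord l r →o XWord l (r + 1) where
  toFun w := ⟨B :: w.1, by simp [ca, w.2.1], by simp [cb, w.2.2, add_comm]⟩
  monotone' _ _ h := XStep.cons_le_cons B h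

/-- The monotone map by which a word operation acts on the words containing a `b`. -/
def endoHom (f : WordEndo) : XWord l (r + 1) →o XWord l (r + 1) where
  toFun w := ⟨f w.1, (f.numA_apply w.1).trans w.2.1, (f.numB_apply w.1 w.numB_pos).trans w.2.2⟩
  monotone' _ _ h := h.lift' f fun _ _ => f.le_of_step

theorem map_endoHom_homotopic_of_le {f g : WordEndo} (h : f ≤ g) :
    (map (endoHom f : XWord l (r + 1) →o _)).Homotopic (map (endoHom g)) :=
  map_homotopic_of_le fun w => h w.1 w.numB_pos

theorem map_iterate_underA_pullB_homotopic (k : ℕ) :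
    (map (endoHom pullB : XWord l (r + 1) →o _)).Homotopic
      (map (endoHom (underA^[k] pullB))) := by
  induction k with
  | zero => exact .refl _
  | succ k ih =>
    have hdown : underA^[k] mergeB ≤ underA^[k] pullB := monotone_underA.iterate k mergeB_le_pullB
    have hup : underA^[k] mergeB ≤ underA^[k + 1] pullB :=
      monotone_underA.iterate k mergeB_le_underA_pullB
    exact ih.trans ((map_endoHom_homotopic_of_le hdown).symm.trans
      (map_endoHom_homotopic_of_le hup))

theorem map_endoHom_pullB_homotopic_id :
    (map (endoHom pullB : XWord l (r + 1) →o _)).Homotopic (ContinuousMap.id _) := by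
  have hid : (endoHom (underA^[l] pullB) : XWord l (r + 1) →o _) = OrderHom.id :=
    OrderHom.ext _ _ <| funext fun w =>
      Subtype.ext (iterate_underA_pullB_apply w.2.1.le w.numB_pos)
  rw [← map_id, ← hid]
  exact map_iterate_underA_pullB_homotopic l

/-- The homotopy equivalence `|X_{l,r}| ≃ₕ |X_{l,r+1}|` given by prepending `b`. -/
noncomputable def homotopyEquivSucc (l r : ℕ) :
    PosetRealization (XWord l r) ≃ₕ PosetRealization (XWord l (r + 1)) where
  toFun := map consHom
  invFun := map eraseHom
  left_inv := by
    have hcomp : eraseHom.comp consHom = (OrderHom.id : XWord l r →o _) := rfl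
    rw [← map_comp, hcomp, map_id]
  right_inv := by
    have hcomp : consHom.comp eraseHom = (endoHom pullB : XWord l (r + 1) →o _) := rfl
    rw [← map_comp, hcomp]
    exact map_endoHom_pullB_homotopic_id

end XWord

/-- **Proposition 2.2.** For all `ℓ, r ≥ 0`, the geometric realization of the poset
`X_{ℓ,r}` is contractible. -/
theorem contractible_realization_XWord (l r : ℕ) :
    ContractibleSpace ↥(PosetRealization (XWord l r)) := by
  induction r with
  | zero => infer_instance
  | succ r ih => exact (XWord.homotopyEquivSucc l r).symm.contractibleSpace
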